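/- arXiv:2505.16414 — 2 statements merged into one kernel-verified Lean document; each statement's English description precedes it below -/
import Mathlib

section
/- Pohozaev identity on a disc in ℝ². Let δ > 0, ρ ∈ ℝ, and let u, h₁, h₂ be C² functions on an open neighborhood of the closed ball {x ∈ ℝ² : ‖x‖ ≤ δ} satisfying -Δu(x) = ρ·h₁(x)·e^{u(x)} - ρ·h₂(x)·e^{-u(x)} for all x in the open ball B_δ(0). Then -δ·∫_{∂B_δ(0)} ((∂u/∂n)² - ½‖∇u‖²) dS = ρ·δ·∫_{∂B_δ(0)} h₁·e^{u} dS - ρ·∫_{B_δ(0)} (2·h₁(x)·e^{u(x)} + (x·∇h₁(x))·e^{u(x)}) dx + ρ·δ·∫_{∂B_δ(0)} h₂·e^{-u} dS - ρ·∫_{B_δ(0)} (2·h₂(x)·e^{-u(x)} + (x·∇h₂(x))·e^{-u(x)}) dx. -/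
open MeasureTheory
open scoped Real RealInnerProductSpace

/-- The Euclidean plane. -/
abbrev E2 : Type := EuclideanSpace ℝ (Fin 2)

/-- The Euclidean Laplacian `Δf = ∂²f/∂x₁² + ∂²f/∂x₂²` on `ℝ²`. -/
noncomputable def laplacian (f : E2 → ℝ) (x : E2) : ℝ :=
  ∑ i : Fin 2,
    fderiv ℝ (fun y => fderiv ℝ f y (EuclideanSpace.single i 1)) x (EuclideanSpace.single i 1)

/-- polar point -/
noncomputable def PP (r θ : ℝ) : E2 := !₂[r * Real.cos θ, r * Real.sin θ]

lemma PP_zero (r θ : ℝ) : PP r θ 0 = r * Real.cos θ := by simp [PP]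
lemma PP_one (r θ : ℝ) : PP r θ 1 = r * Real.sin θ := by simp [PP]

lemma PP_norm (r θ : ℝ) (hr : 0 ≤ r) : ‖PP r θ‖ = r := by
  rw [EuclideanSpace.norm_eq, Fin.sum_univ_two, PP_zero, PP_one]
  rw [Real.norm_eq_abs, Real.norm_eq_abs, sq_abs, sq_abs]
  have : (r * Real.cos θ)^2 + (r * Real.sin θ)^2 = r^2 := by
    have := Real.sin_sq_add_cos_sq θ
    linear_combination r^2 * this
  rw [this, Real.sqrt_sq hr]

lemma PP_dist (r s t : ℝ) (hr : 0 ≤ r) :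
    dist (PP r s) (PP r t) = 2 * r * |Real.sin ((s - t) / 2)| := by
  rw [EuclideanSpace.dist_eq, Fin.sum_univ_two, PP_zero, PP_one, PP_zero, PP_one]
  rw [Real.dist_eq, Real.dist_eq, sq_abs, sq_abs, ← mul_sub, ← mul_sub,
    Real.cos_sub_cos, Real.sin_sub_sin]
  have h : (r * (-2 * Real.sin ((s + t) / 2) * Real.sin ((s - t) / 2))) ^ 2 +
      (r * (2 * Real.sin ((s - t) / 2) * Real.cos ((s + t) / 2))) ^ 2
      = (2 * r * |Real.sin ((s - t) / 2)|)^2 := by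
    rw [mul_pow _ (|_|), sq_abs]
    have := Real.sin_sq_add_cos_sq ((s + t)/2)
    linear_combination (4 * r^2 * Real.sin ((s - t) / 2)^2) * this
  rw [h, Real.sqrt_sq (by positivity)]

lemma PP_cont : Continuous (fun p : ℝ × ℝ => PP p.1 p.2) := by
  unfold PP
  fun_prop

lemma PP_cont' (r : ℝ) : Continuous (PP r) := by
  unfold PP
  fun_prop

lemma PP_inj (r : ℝ) (hr : 0 < r) : Set.InjOn (PP r) (Set.Ioc (-π) π) := by
  intro s hs t ht h
  have h1 := PP_dist r s t hr.le
  rw [h, dist_self] at h1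
  have h2 : Real.sin ((s - t) / 2) = 0 := by
    have : |Real.sin ((s - t) / 2)| = 0 := by
      rcases mul_eq_zero.1 h1.symm with h | h
      · linarith
      · exact h
    exact abs_eq_zero.1 this
  rw [Real.sin_eq_zero_iff_of_lt_of_lt (by linarith [hs.1, ht.2]) (by linarith [hs.2, ht.1])] at h2
  linarith

lemma PP_surj (x : E2) : ∃ θ ∈ Set.Ioc (-π) π, PP ‖x‖ θ = x := by
  refine ⟨Complex.arg ⟨x 0, x 1⟩, Complex.arg_mem_Ioc _, ?_⟩
  have h : ‖(⟨x 0, x 1⟩ : ℂ)‖ = ‖x‖ := by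
    rw [EuclideanSpace.norm_eq, Fin.sum_univ_two, Complex.norm_eq_sqrt_sq_add_sq]
    simp
  ext i
  fin_cases i
  · change PP _ _ 0 = x 0
    rw [PP_zero, ← h, Complex.norm_mul_cos_arg]
  · change PP _ _ 1 = x 1
    rw [PP_one, ← h, Complex.norm_mul_sin_arg]

lemma abs_sin_ge (x η : ℝ) (hx : |x| ≤ η) (h1 : η ≤ 1) : |x| * (1 - η) ≤ |Real.sin x| := by
  wlog h : 0 ≤ x generalizing x
  · have := this (-x) (by rwa [abs_neg]) (by linarith)
    rwa [abs_neg, Real.sin_neg, abs_neg] at this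
  rw [abs_of_nonneg h] at hx ⊢
  refine le_trans ?_ (le_abs_self _)
  rcases h.eq_or_lt with h | h
  · rw [← h]; simp
  have h3 := Real.sin_gt_sub_cube h
  have : x ^ 3 / 6 ≤ x * η := by
    have : x^2 ≤ η := by nlinarith
    nlinarith
  nlinarith

lemma piece_le (r η : ℝ) (hr : 0 < r) (h0 : 0 < η) (h1 : η < 1) (A : Set ℝ)
    (hA : ∀ s ∈ A, ∀ t ∈ A, |s - t| < η) :
    volume A ≤ ENNReal.ofReal ((r * (1 - η))⁻¹) * μH[1] (PP r '' A) := by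
  have key : ∀ s ∈ A, ∀ t ∈ A, |s - t| ≤ (r * (1 - η))⁻¹ * dist (PP r s) (PP r t) := by
    intro s hs t ht
    have h2 := abs_sin_ge ((s - t) / 2) η (by
      rw [abs_div, abs_two]; have := hA s hs t ht; have := abs_nonneg (s - t); linarith) h1.le
    rw [abs_div, abs_two] at h2
    rw [PP_dist _ _ _ hr.le, inv_mul_eq_div, le_div_iff₀ (mul_pos hr (by linarith))]
    nlinarith
  have hinj : Set.InjOn (PP r) A := by
    intro s hs t ht h
    have := key s hs t ht
    rw [h, dist_self, mul_zero] at this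
    have := abs_eq_zero.1 (le_antisymm this (abs_nonneg _))
    linarith
  have hpos : 0 ≤ (r * (1 - η))⁻¹ := inv_nonneg.2 (mul_pos hr (by linarith)).le
  have hL : LipschitzOnWith (Real.toNNReal ((r * (1 - η))⁻¹)) (Function.invFunOn (PP r) A)
      (PP r '' A) := by
    apply LipschitzOnWith.of_dist_le_mul
    rintro _ ⟨s, hs, rfl⟩ _ ⟨t, ht, rfl⟩
    rw [hinj.leftInvOn_invFunOn hs, hinj.leftInvOn_invFunOn ht, Real.coe_toNNReal _ hpos,
      Real.dist_eq]
    exact key s hs t ht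
  have h3 := hL.hausdorffMeasure_image_le (d := 1) zero_le_one
  rw [hinj.leftInvOn_invFunOn.image_image, MeasureTheory.hausdorffMeasure_real] at h3
  simpa [ENNReal.ofReal] using h3

lemma PP_lip (r : ℝ) (hr : 0 < r) : LipschitzWith (Real.toNNReal r) (PP r) := by
  apply LipschitzWith.of_dist_le_mul
  intro s t
  rw [PP_dist _ _ _ hr.le, Real.coe_toNNReal _ hr.le, Real.dist_eq]
  have := Real.abs_sin_le_abs (x := (s - t) / 2)
  rw [abs_div, abs_two] at this
  nlinarith

lemma arc_measure (r : ℝ) (hr : 0 < r) (A : Set ℝ) (hA : MeasurableSet A)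
    (hA' : A ⊆ Set.Ioc (-π) π) :
    volume A = ENNReal.ofReal (r⁻¹) * μH[1] (PP r '' A) := by
  have hup : μH[1] (PP r '' A) ≤ ENNReal.ofReal r * volume A := by
    have := (PP_lip r hr).hausdorffMeasure_image_le (d := 1) zero_le_one A
    rw [MeasureTheory.hausdorffMeasure_real] at this
    simpa [ENNReal.ofReal] using this
  have hfin : volume A ≠ ⊤ := by
    refine ne_top_of_le_ne_top ?_ (measure_mono hA')
    simp
  have hfin2 : μH[1] (PP r '' A) ≠ ⊤ :=
    ne_top_of_le_ne_top (ENNReal.mul_ne_top ENNReal.ofReal_ne_top hfin) hup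
  apply le_antisymm
  · have hη : ∀ η : ℝ, 0 < η → η < 1 →
        volume A ≤ ENNReal.ofReal ((r * (1 - η))⁻¹) * μH[1] (PP r '' A) := by
      intro η h0 h1
      let B : ℤ → Set ℝ := fun k => A ∩ (fun x : ℝ => ⌊x / η⌋) ⁻¹' {k}
      have hBm : ∀ k, MeasurableSet (B k) := fun k =>
        hA.inter ((Int.measurable_floor.comp (measurable_id.div_const η)) (measurableSet_singleton k))
      have hBA : ∀ k, B k ⊆ A := fun k => Set.inter_subset_left
      have hU : A = ⋃ k, B k := by
        ext x; simp [B]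
      have hd : Pairwise (Function.onFun Disjoint B) := by
        intro i j hij
        rw [Function.onFun, Set.disjoint_left]
        rintro x ⟨_, h1⟩ ⟨_, h2⟩
        exact hij (h1.symm.trans h2)
      have hinjA : Set.InjOn (PP r) A := (PP_inj r hr).mono hA'
      have hU2 : PP r '' A = ⋃ k, PP r '' B k := by
        rw [← Set.image_iUnion, ← hU]
      have hd2 : Pairwise (Function.onFun Disjoint (fun k => PP r '' B k)) := by
        intro i j hij
        rw [Function.onFun, Set.disjoint_left]
        rintro _ ⟨x, hx, rfl⟩ ⟨y, hy, hxy⟩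
        have := hinjA (hBA j hy) (hBA i hx) hxy
        subst this
        exact (Set.disjoint_left.1 (hd hij)) hx hy
      have e1 : volume A = ∑' k, volume (B k) := by
        conv_lhs => rw [hU]
        exact measure_iUnion hd hBm
      have e2 : μH[1] (PP r '' A) = ∑' k, μH[1] (PP r '' B k) := by
        rw [hU2]
        exact measure_iUnion hd2 fun k => (hBm k).image_of_continuousOn_injOn
          (PP_cont' r).continuousOn (hinjA.mono (hBA k))
      rw [e1, e2, ← ENNReal.tsum_mul_left]
      refine ENNReal.tsum_le_tsum fun k => piece_le r η hr h0 h1 _ ?_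
      rintro s ⟨_, hs⟩ t ⟨_, ht⟩
      have h3 := Int.abs_sub_lt_one_of_floor_eq_floor (show ⌊s / η⌋ = ⌊t / η⌋ from hs.trans ht.symm)
      rw [← sub_div, abs_div, abs_of_pos h0, div_lt_one h0] at h3
      exact h3
    have ht : Filter.Tendsto (fun η : ℝ => ENNReal.ofReal ((r * (1 - η))⁻¹) * μH[1] (PP r '' A))
        (nhdsWithin 0 (Set.Ioi 0)) (nhds (ENNReal.ofReal (r⁻¹) * μH[1] (PP r '' A))) := by
      refine ENNReal.Tendsto.mul_const ?_ (Or.inr hfin2)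
      refine ENNReal.tendsto_ofReal ?_
      have : ContinuousAt (fun η : ℝ => (r * (1 - η))⁻¹) 0 := by
        apply ContinuousAt.inv₀ (by fun_prop)
        simpa using hr.ne'
      have h := this.tendsto
      simp only [sub_zero, mul_one] at h
      exact h.mono_left nhdsWithin_le_nhds
    refine ge_of_tendsto ht ?_
    filter_upwards [Ioo_mem_nhdsGT (show (0:ℝ) < 1 by norm_num)] with η hh
    exact hη η hh.1 hh.2
  · calc _ ≤ ENNReal.ofReal (r⁻¹) * (ENNReal.ofReal r * volume A) := by gcongr
      _ = volume A := by
        rw [← mul_assoc, ← ENNReal.ofReal_mul (by positivity), inv_mul_cancel₀ hr.ne']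
        simp

lemma map_PP (r : ℝ) (hr : 0 < r) :
    Measure.map (PP r) (volume.restrict (Set.Ioc (-π) π)) =
      ENNReal.ofReal (r⁻¹) • (μH[1] : Measure E2).restrict (Metric.sphere 0 r) := by
  ext B hB
  rw [Measure.map_apply (PP_cont' r).measurable hB, Measure.smul_apply, Measure.restrict_apply hB,
    Measure.restrict_apply ((PP_cont' r).measurable hB), smul_eq_mul,
    arc_measure r hr _ (((PP_cont' r).measurable hB).inter measurableSet_Ioc) Set.inter_subset_right]
  congr 2
  ext x
  constructor
  · rintro ⟨θ, ⟨h1, h2⟩, rfl⟩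
    exact ⟨h1, by simp [PP_norm r θ hr.le]⟩
  · rintro ⟨h1, h2⟩
    obtain ⟨θ, h3, h4⟩ := PP_surj x
    have : ‖x‖ = r := by simpa using h2
    rw [this] at h4
    exact ⟨θ, ⟨by rw [Set.mem_preimage, h4]; exact h1, h3⟩, h4⟩

lemma sphere_integral (r : ℝ) (hr : 0 < r) (f : E2 → ℝ) (hf : ContinuousOn f (Metric.sphere 0 r)) :
    ∫ x in Metric.sphere (0 : E2) r, f x ∂μH[1] = r * ∫ θ in (-π)..π, f (PP r θ) := by
  have hm : AEStronglyMeasurable f (Measure.map (PP r) (volume.restrict (Set.Ioc (-π) π))) := by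
    rw [map_PP r hr]
    exact (hf.aestronglyMeasurable Metric.isClosed_sphere.measurableSet).smul_measure _
  rw [intervalIntegral.integral_of_le (by linarith [Real.pi_pos]),
    ← integral_map (PP_cont' r).aemeasurable hm, map_PP r hr, integral_smul_measure,
    ENNReal.toReal_ofReal (by positivity), smul_eq_mul, mul_inv_cancel_left₀ hr.ne']

lemma ball_integral (r : ℝ) (hr : 0 < r) (f : E2 → ℝ) (hf : ContinuousOn f (Metric.closedBall 0 r)) :
    ∫ x in Metric.ball (0 : E2) r, f x = ∫ s in (0)..r, ∫ θ in (-π)..π, s * f (PP s θ) := by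
  have hmp : MeasurePreserving (fun p : ℝ × ℝ => (!₂[p.1, p.2] : E2)) volume volume :=
    ((EuclideanSpace.volume_preserving_symm_measurableEquiv_toLp (Fin 2)).symm).comp
      ((MeasureTheory.volume_preserving_finTwoArrow ℝ).symm)
  have hemb : MeasurableEmbedding (fun p : ℝ × ℝ => (!₂[p.1, p.2] : E2)) :=
    (MeasurableEquiv.toLp 2 (Fin 2 → ℝ)).measurableEmbedding.comp
      (MeasurableEquiv.finTwoArrow (α := ℝ)).symm.measurableEmbedding
  have e0 : ∀ p : ℝ × ℝ, (!₂[(polarCoord.symm p).1, (polarCoord.symm p).2] : E2) = PP p.1 p.2 := by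
    intro p; simp [PP, polarCoord_symm_apply]
  rw [← integral_indicator Metric.isOpen_ball.measurableSet, ← hmp.integral_comp hemb,
    ← integral_comp_polarCoord_symm]
  simp only [e0]
  have hpi := Real.pi_pos
  have e1 : ∫ p in polarCoord.target, p.1 • (Metric.ball (0:E2) r).indicator f (PP p.1 p.2)
      = ∫ p in Set.Ioo 0 r ×ˢ Set.Ioo (-π) π, p.1 * f (PP p.1 p.2) := by
    rw [← integral_indicator polarCoord.open_target.measurableSet,
      ← integral_indicator (measurableSet_Ioo.prod measurableSet_Ioo)]
    congr 1
    ext p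
    rw [polarCoord_target]
    by_cases h1 : 0 < p.1
    · have := PP_norm p.1 p.2 h1.le
      by_cases h2 : p.1 < r <;> by_cases h3 : -π < p.2 <;> by_cases h4 : p.2 < π <;>
        simp [Set.indicator, Set.mem_prod, h1, h2, h3, h4, this]
    · simp [Set.indicator, Set.mem_prod, h1]
  rw [e1]
  have hc : ContinuousOn (fun p : ℝ × ℝ => p.1 * f (PP p.1 p.2)) (Set.Icc 0 r ×ˢ Set.Icc (-π) π) := by
    refine continuousOn_fst.mul (hf.comp PP_cont.continuousOn ?_)
    intro p hp
    simp [PP_norm p.1 p.2 hp.1.1, hp.1.2]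
  have hi := (hc.integrableOn_compact (μ := volume) (isCompact_Icc.prod isCompact_Icc)).mono_set
    (Set.prod_mono Set.Ioo_subset_Icc_self Set.Ioo_subset_Icc_self)
  rw [Measure.volume_eq_prod] at hi ⊢
  rw [setIntegral_prod _ hi, intervalIntegral.integral_of_le hr.le, integral_Ioc_eq_integral_Ioo]
  congr 1
  ext s
  rw [intervalIntegral.integral_of_le (by linarith), integral_Ioc_eq_integral_Ioo]

lemma PP_eq (r θ : ℝ) : PP r θ = (r * Real.cos θ) • (EuclideanSpace.single 0 1 : E2) +
    (r * Real.sin θ) • (EuclideanSpace.single 1 1 : E2) := by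
  ext i
  fin_cases i <;> simp [PP]

lemma PP_deriv_r (r θ : ℝ) : HasDerivAt (fun s => PP s θ)
    (Real.cos θ • (EuclideanSpace.single 0 1 : E2) + Real.sin θ • (EuclideanSpace.single 1 1 : E2)) r := by
  simp only [PP_eq]
  have h1 := ((hasDerivAt_id r).mul_const (Real.cos θ)).smul_const (EuclideanSpace.single 0 1 : E2)
  have h2 := ((hasDerivAt_id r).mul_const (Real.sin θ)).smul_const (EuclideanSpace.single 1 1 : E2)
  simp only [one_mul, id] at h1 h2
  exact h1.add h2

lemma PP_deriv_t (r θ : ℝ) : HasDerivAt (fun t => PP r t)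
    ((r * -Real.sin θ) • (EuclideanSpace.single 0 1 : E2) +
      (r * Real.cos θ) • (EuclideanSpace.single 1 1 : E2)) θ := by
  simp only [PP_eq]
  exact (((Real.hasDerivAt_cos θ).const_mul r).smul_const _).add
    (((Real.hasDerivAt_sin θ).const_mul r).smul_const _)

lemma PP_differentiable : Differentiable ℝ (fun p : ℝ × ℝ => PP p.1 p.2) := by
  simp only [PP_eq]
  fun_prop

lemma div_disc (δ : ℝ) (hδ : 0 < δ) (U : Set E2) (hU : IsOpen U)
    (hBU : Metric.closedBall (0 : E2) δ ⊆ U) (a b : E2 → ℝ)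
    (ha : ContDiffOn ℝ 1 a U) (hb : ContDiffOn ℝ 1 b U) :
    ∫ x in Metric.ball (0 : E2) δ,
      (fderiv ℝ a x (EuclideanSpace.single 0 1) + fderiv ℝ b x (EuclideanSpace.single 1 1)) =
    δ * ∫ θ in (-π)..π, (a (PP δ θ) * Real.cos θ + b (PP δ θ) * Real.sin θ) := by
  have hda : ∀ x ∈ U, DifferentiableAt ℝ a x := fun x hx =>
    (ha.contDiffAt (hU.mem_nhds hx)).differentiableAt one_ne_zero
  have hdb : ∀ x ∈ U, DifferentiableAt ℝ b x := fun x hx =>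
    (hb.contDiffAt (hU.mem_nhds hx)).differentiableAt one_ne_zero
  have hca : ContinuousOn (fun x => fderiv ℝ a x (EuclideanSpace.single 0 1)) U :=
    (ha.continuousOn_fderiv_of_isOpen hU le_rfl).clm_apply continuousOn_const
  have hcb : ContinuousOn (fun x => fderiv ℝ b x (EuclideanSpace.single 1 1)) U :=
    (hb.continuousOn_fderiv_of_isOpen hU le_rfl).clm_apply continuousOn_const
  have hcd : ContinuousOn (fun x => fderiv ℝ a x (EuclideanSpace.single 0 1) +
      fderiv ℝ b x (EuclideanSpace.single 1 1)) U := hca.add hcb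
  have hpi := Real.pi_pos
  rw [ball_integral δ hδ _ (hcd.mono hBU)]
  let f : ℝ × ℝ → ℝ := fun p => p.1 * (a (PP p.1 p.2) * Real.cos p.2 + b (PP p.1 p.2) * Real.sin p.2)
  let g : ℝ × ℝ → ℝ := fun p => b (PP p.1 p.2) * Real.cos p.2 - a (PP p.1 p.2) * Real.sin p.2
  have hPU : ∀ p : ℝ × ℝ, p ∈ Set.uIcc 0 δ ×ˢ Set.uIcc (-π) π → PP p.1 p.2 ∈ U := by
    intro p hp
    rw [Set.uIcc_of_le hδ.le] at hp
    apply hBU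
    simp [PP_norm p.1 p.2 hp.1.1, hp.1.2]
  have haP : ∀ p : ℝ × ℝ, p ∈ Set.uIcc 0 δ ×ˢ Set.uIcc (-π) π →
      DifferentiableAt ℝ (fun p : ℝ × ℝ => a (PP p.1 p.2)) p := fun p hp =>
    DifferentiableAt.comp (f := fun p : ℝ × ℝ => PP p.1 p.2) p (hda _ (hPU p hp)) (PP_differentiable p)
  have hbP : ∀ p : ℝ × ℝ, p ∈ Set.uIcc 0 δ ×ˢ Set.uIcc (-π) π →
      DifferentiableAt ℝ (fun p : ℝ × ℝ => b (PP p.1 p.2)) p := fun p hp =>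
    DifferentiableAt.comp (f := fun p : ℝ × ℝ => PP p.1 p.2) p (hdb _ (hPU p hp)) (PP_differentiable p)
  have hf : ∀ p : ℝ × ℝ, p ∈ Set.uIcc 0 δ ×ˢ Set.uIcc (-π) π → DifferentiableAt ℝ f p := by
    intro p hp
    have h1 := haP p hp
    have h2 := hbP p hp
    have h3 : DifferentiableAt ℝ (fun p : ℝ × ℝ => Real.cos p.2) p := by fun_prop
    have h4 : DifferentiableAt ℝ (fun p : ℝ × ℝ => Real.sin p.2) p := by fun_prop
    exact differentiableAt_fst.mul ((h1.mul h3).add (h2.mul h4))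
  have hg : ∀ p : ℝ × ℝ, p ∈ Set.uIcc 0 δ ×ˢ Set.uIcc (-π) π → DifferentiableAt ℝ g p := by
    intro p hp
    have h1 := haP p hp
    have h2 := hbP p hp
    have h3 : DifferentiableAt ℝ (fun p : ℝ × ℝ => Real.cos p.2) p := by fun_prop
    have h4 : DifferentiableAt ℝ (fun p : ℝ × ℝ => Real.sin p.2) p := by fun_prop
    exact (h2.mul h3).sub (h1.mul h4)
  have hdiv : ∀ p : ℝ × ℝ, p ∈ Set.uIcc 0 δ ×ˢ Set.uIcc (-π) π →
      fderiv ℝ f p (1, 0) + fderiv ℝ g p (0, 1) = p.1 * (fderiv ℝ a (PP p.1 p.2)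
        (EuclideanSpace.single 0 1) + fderiv ℝ b (PP p.1 p.2) (EuclideanSpace.single 1 1)) := by
    rintro ⟨r, θ⟩ hp
    have hx := hPU _ hp
    have l1 : HasDerivAt (fun s : ℝ => (s, θ)) ((1 : ℝ), (0 : ℝ)) r :=
      (hasDerivAt_id r).prodMk (hasDerivAt_const r θ)
    have l2 : HasDerivAt (fun t : ℝ => (r, t)) ((0 : ℝ), (1 : ℝ)) θ :=
      (hasDerivAt_const θ r).prodMk (hasDerivAt_id θ)
    have f1 := HasFDerivAt.comp_hasDerivAt r (hf _ hp).hasFDerivAt l1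
    have g1 := HasFDerivAt.comp_hasDerivAt θ (hg _ hp).hasFDerivAt l2
    have ar := HasFDerivAt.comp_hasDerivAt r (hda _ hx).hasFDerivAt (PP_deriv_r r θ)
    have br := HasFDerivAt.comp_hasDerivAt r (hdb _ hx).hasFDerivAt (PP_deriv_r r θ)
    have at' := HasFDerivAt.comp_hasDerivAt θ (hda _ hx).hasFDerivAt (PP_deriv_t r θ)
    have bt := HasFDerivAt.comp_hasDerivAt θ (hdb _ hx).hasFDerivAt (PP_deriv_t r θ)
    have f2 := (hasDerivAt_id r).mul
      ((ar.mul_const (Real.cos θ)).add (br.mul_const (Real.sin θ)))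
    have g2 := (bt.mul (Real.hasDerivAt_cos θ)).sub (at'.mul (Real.hasDerivAt_sin θ))
    have e1 := f1.unique f2
    have e2 := g1.unique g2
    rw [e1, e2]
    simp only [map_add, map_smul, smul_eq_mul, id, Function.comp, Pi.add_apply]
    have hsc := Real.sin_sq_add_cos_sq θ
    linear_combination (r * (fderiv ℝ a (PP r θ)
        (EuclideanSpace.single 0 1) + fderiv ℝ b (PP r θ) (EuclideanSpace.single 1 1))) * hsc
  have hsub : Set.Ioo (min 0 δ) (max 0 δ) ×ˢ Set.Ioo (min (-π) π) (max (-π) π) ⊆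
      Set.uIcc 0 δ ×ˢ Set.uIcc (-π) π :=
    Set.prod_mono Set.Ioo_subset_Icc_self Set.Ioo_subset_Icc_self
  have hmeas : MeasurableSet (Set.uIcc 0 δ ×ˢ Set.uIcc (-π) π) :=
    measurableSet_uIcc.prod measurableSet_uIcc
  have hint : IntegrableOn (fun p => fderiv ℝ f p (1, 0) + fderiv ℝ g p (0, 1))
      (Set.uIcc 0 δ ×ˢ Set.uIcc (-π) π) volume := by
    rw [integrableOn_congr_fun hdiv hmeas]
    refine ContinuousOn.integrableOn_compact (isCompact_uIcc.prod isCompact_uIcc) ?_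
    exact continuousOn_fst.mul (hcd.comp PP_cont.continuousOn hPU)
  have main := integral2_divergence_prod_of_hasFDerivAt f g (fderiv ℝ f) (fderiv ℝ g) 0 (-π) δ π
    (fun p hp => (hf p hp).continuousAt.continuousWithinAt)
    (fun p hp => (hg p hp).continuousAt.continuousWithinAt)
    (fun p hp => (hf p (hsub hp)).hasFDerivAt) (fun p hp => (hg p (hsub hp)).hasFDerivAt) hint
  have e3 : (∫ s in (0)..δ, ∫ θ in (-π)..π, s * (fderiv ℝ a (PP s θ)
        (EuclideanSpace.single 0 1) + fderiv ℝ b (PP s θ) (EuclideanSpace.single 1 1))) =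
      ∫ s in (0)..δ, ∫ θ in (-π)..π, fderiv ℝ f (s, θ) (1, 0) + fderiv ℝ g (s, θ) (0, 1) := by
    refine intervalIntegral.integral_congr fun s hs => ?_
    refine intervalIntegral.integral_congr fun t ht => ?_
    exact (hdiv (s, t) ⟨hs, ht⟩).symm
  have hper : ∀ s, PP s (-π) = PP s π := by intro s; simp [PP]
  have e4 : ∀ s, g (s, -π) = g (s, π) := by
    intro s; simp [g, hper]
  refine e3.trans (main.trans ?_)
  simp only [e4, f, sub_self, zero_add, zero_mul, intervalIntegral.integral_zero, sub_zero,
    intervalIntegral.integral_const_mul]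

lemma fd_coord (L : E2 →L[ℝ] ℝ) (x : E2) :
    L x = x 0 * L (EuclideanSpace.single 0 1) + x 1 * L (EuclideanSpace.single 1 1) := by
  have : x = x 0 • (EuclideanSpace.single 0 1 : E2) + x 1 • (EuclideanSpace.single 1 1 : E2) := by
    ext i
    fin_cases i <;> simp
  conv_lhs => rw [this]
  simp

lemma inner_grad (h : E2 → ℝ) (x : E2) : ⟪x, gradient h x⟫ = fderiv ℝ h x x := by
  rw [real_inner_comm, inner_gradient_left]

lemma norm_grad (u : E2 → ℝ) (x : E2) : ‖gradient u x‖ ^ 2 =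
    fderiv ℝ u x (EuclideanSpace.single 0 1) ^ 2 + fderiv ℝ u x (EuclideanSpace.single 1 1) ^ 2 := by
  have h : ∀ i, gradient u x i = fderiv ℝ u x (EuclideanSpace.single i 1) := by
    intro i
    rw [← inner_gradient_left, EuclideanSpace.inner_single_right]
    simp
  rw [EuclideanSpace.real_norm_sq_eq, Fin.sum_univ_two, h, h]

/-- Pohozaev identity on the disc of radius `δ` in `ℝ²` for a solution of
`-Δu = ρ h₁ e^u - ρ h₂ e^{-u}`. Boundary integrals are taken with respect to arc-length
(one-dimensional Hausdorff) measure `μH[1]` on the circle `∂B_δ(0)`, and `∂u/∂n` is the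
outward radial derivative `fderiv ℝ u x (δ⁻¹ • x)`. -/
theorem pohozaev_identity_disc (δ ρ : ℝ) (hδ : 0 < δ)
    (u h₁ h₂ : E2 → ℝ) (U : Set E2) (hU : IsOpen U)
    (hBU : Metric.closedBall (0 : E2) δ ⊆ U)
    (hu : ContDiffOn ℝ 2 u U) (hh₁ : ContDiffOn ℝ 2 h₁ U) (hh₂ : ContDiffOn ℝ 2 h₂ U)
    (hpde : ∀ x ∈ Metric.ball (0 : E2) δ,
      -laplacian u x = ρ * h₁ x * Real.exp (u x) - ρ * h₂ x * Real.exp (-u x)) :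
    -δ * ∫ x in Metric.sphere (0 : E2) δ,
        ((fderiv ℝ u x (δ⁻¹ • x)) ^ 2 - (1 / 2) * ‖gradient u x‖ ^ 2) ∂μH[1] =
      ρ * δ * (∫ x in Metric.sphere (0 : E2) δ, h₁ x * Real.exp (u x) ∂μH[1]) -
        ρ * (∫ x in Metric.ball (0 : E2) δ,
          (2 * h₁ x * Real.exp (u x) + ⟪x, gradient h₁ x⟫ * Real.exp (u x))) +
        ρ * δ * (∫ x in Metric.sphere (0 : E2) δ, h₂ x * Real.exp (-u x) ∂μH[1]) -
        ρ * (∫ x in Metric.ball (0 : E2) δ,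
          (2 * h₂ x * Real.exp (-u x) + ⟪x, gradient h₂ x⟫ * Real.exp (-u x))) := by
  set e0 : E2 := EuclideanSpace.single 0 1 with he0
  set e1 : E2 := EuclideanSpace.single 1 1 with he1
  let p : E2 → ℝ := fun x => fderiv ℝ u x e0
  let q : E2 → ℝ := fun x => fderiv ℝ u x e1
  let W : E2 → ℝ := fun x => ρ * (h₁ x * Real.exp (u x) + h₂ x * Real.exp (-u x))
  let a : E2 → ℝ := fun x => (x 0 * p x + x 1 * q x) * p x
    - (1 / 2) * ((p x * p x + q x * q x) * x 0) + W x * x 0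
  let b : E2 → ℝ := fun x => (x 0 * p x + x 1 * q x) * q x
    - (1 / 2) * ((p x * p x + q x * q x) * x 1) + W x * x 1
  have hDu : ContDiffOn ℝ 1 (fderiv ℝ u) U := hu.fderiv_of_isOpen hU (by norm_num)
  have hp : ContDiffOn ℝ 1 p U := hDu.clm_apply contDiffOn_const
  have hq : ContDiffOn ℝ 1 q U := hDu.clm_apply contDiffOn_const
  have hu1 : ContDiffOn ℝ 1 u U := hu.of_le (by norm_num)
  have h11 : ContDiffOn ℝ 1 h₁ U := hh₁.of_le (by norm_num)
  have h21 : ContDiffOn ℝ 1 h₂ U := hh₂.of_le (by norm_num)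
  have hw1 : ContDiffOn ℝ 1 (fun x => h₁ x * Real.exp (u x)) U := h11.mul hu1.exp
  have hw2 : ContDiffOn ℝ 1 (fun x => h₂ x * Real.exp (-u x)) U := h21.mul hu1.neg.exp
  have hW : ContDiffOn ℝ 1 W U := contDiffOn_const.mul (hw1.add hw2)
  have hx0 : ContDiffOn ℝ 1 (fun x : E2 => x 0) U := by fun_prop
  have hx1 : ContDiffOn ℝ 1 (fun x : E2 => x 1) U := by fun_prop
  have ha : ContDiffOn ℝ 1 a U :=
    ((((hx0.mul hp).add (hx1.mul hq)).mul hp).sub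
      (contDiffOn_const.mul (((hp.mul hp).add (hq.mul hq)).mul hx0))).add (hW.mul hx0)
  have hb : ContDiffOn ℝ 1 b U :=
    ((((hx0.mul hp).add (hx1.mul hq)).mul hq).sub
      (contDiffOn_const.mul (((hp.mul hp).add (hq.mul hq)).mul hx1))).add (hW.mul hx1)
  have hd : ∀ f : E2 → ℝ, ContDiffOn ℝ 1 f U → ∀ x ∈ U, HasFDerivAt f (fderiv ℝ f x) x :=
    fun f hf x hx => ((hf.contDiffAt (hU.mem_nhds hx)).differentiableAt one_ne_zero).hasFDerivAt
  have main := div_disc δ hδ U hU hBU a b ha hb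
  have hdiv : ∀ x ∈ Metric.ball (0 : E2) δ, fderiv ℝ a x e0 + fderiv ℝ b x e1 =
      ρ * (2 * h₁ x * Real.exp (u x) + ⟪x, gradient h₁ x⟫ * Real.exp (u x)) +
      ρ * (2 * h₂ x * Real.exp (-u x) + ⟪x, gradient h₂ x⟫ * Real.exp (-u x)) := by
    intro x hx
    have hxU : x ∈ U := hBU (Metric.ball_subset_closedBall hx)
    have dp := hd p hp x hxU
    have dq := hd q hq x hxU
    have du := hd u hu1 x hxU
    have d1 := hd h₁ h11 x hxU
    have d2 := hd h₂ h21 x hxU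
    have d0 : HasFDerivAt (fun x : E2 => x 0) (EuclideanSpace.proj 0 : E2 →L[ℝ] ℝ) x :=
      (EuclideanSpace.proj 0 : E2 →L[ℝ] ℝ).hasFDerivAt
    have d0' : HasFDerivAt (fun x : E2 => x 1) (EuclideanSpace.proj 1 : E2 →L[ℝ] ℝ) x :=
      (EuclideanSpace.proj 1 : E2 →L[ℝ] ℝ).hasFDerivAt
    have dW : HasFDerivAt W _ x := ((d1.mul du.exp).add (d2.mul du.neg.exp)).const_mul ρ
    have da : HasFDerivAt a _ x :=
      ((((d0.mul dp).add (d0'.mul dq)).mul dp).sub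
        ((((dp.mul dp).add (dq.mul dq)).mul d0).const_mul (1 / 2))).add (dW.mul d0)
    have db : HasFDerivAt b _ x :=
      ((((d0.mul dp).add (d0'.mul dq)).mul dq).sub
        ((((dp.mul dp).add (dq.mul dq)).mul d0').const_mul (1 / 2))).add (dW.mul d0')
    have hlap := hpde x hx
    have hlap2 : laplacian u x = fderiv ℝ p x e0 + fderiv ℝ q x e1 := by
      rw [laplacian, Fin.sum_univ_two]
    have hdd : DifferentiableAt ℝ (fderiv ℝ u) x :=
      (hDu.contDiffAt (hU.mem_nhds hxU)).differentiableAt one_ne_zero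
    have hsym : fderiv ℝ p x e1 = fderiv ℝ q x e0 := by
      have hs := (hu.contDiffAt (hU.mem_nhds hxU)).isSymmSndFDerivAt (by simp)
      have c1 : ∀ v w : E2, fderiv ℝ (fun y => fderiv ℝ u y v) x w
          = fderiv ℝ (fderiv ℝ u) x w v := by
        intro v w
        rw [fderiv_clm_apply hdd (differentiableAt_const v)]
        simp
      change fderiv ℝ (fun y => fderiv ℝ u y e0) x e1 = fderiv ℝ (fun y => fderiv ℝ u y e1) x e0
      rw [c1, c1]
      exact hs e1 e0
    have hpx : fderiv ℝ u x e0 = p x := rfl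
    have hqx : fderiv ℝ u x e1 = q x := rfl
    have y00 : (EuclideanSpace.proj 0 : E2 →L[ℝ] ℝ) e0 = 1 := by simp [e0]
    have y01 : (EuclideanSpace.proj 1 : E2 →L[ℝ] ℝ) e0 = 0 := by simp [e0]
    have y10 : (EuclideanSpace.proj 0 : E2 →L[ℝ] ℝ) e1 = 0 := by simp [e1]
    have y11 : (EuclideanSpace.proj 1 : E2 →L[ℝ] ℝ) e1 = 1 := by simp [e1]
    rw [hlap2] at hlap
    rw [da.fderiv, db.fderiv, inner_grad, inner_grad, fd_coord _ x, fd_coord (fderiv ℝ h₂ x) x]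
    simp only [add_apply, sub_apply,
      smul_apply, neg_apply, smul_eq_mul,
      y00, y01, y10, y11, ← he0, ← he1, hpx, hqx, hsym, W,
      Pi.add_apply, Pi.mul_apply, Pi.neg_apply]
    linear_combination (-(x 0 * p x + x 1 * q x)) * hlap
  have hballm : MeasurableSet (Metric.ball (0 : E2) δ) := Metric.isOpen_ball.measurableSet
  have hci : ∀ f : E2 → ℝ, ContinuousOn f U → IntegrableOn f (Metric.ball (0 : E2) δ) volume :=
    fun f hf => ((hf.mono hBU).integrableOn_compact (isCompact_closedBall _ _)).mono_set
      Metric.ball_subset_closedBall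
  have hcg : ∀ h : E2 → ℝ, ContDiffOn ℝ 1 h U → ContinuousOn (fun x => ⟪x, gradient h x⟫) U := by
    intro h hh
    simp only [inner_grad]
    exact (hh.continuousOn_fderiv_of_isOpen hU le_rfl).clm_apply continuousOn_id
  have hi1 := hci (fun x => 2 * h₁ x * Real.exp (u x) + ⟪x, gradient h₁ x⟫ * Real.exp (u x))
    (((continuousOn_const.mul h11.continuousOn).mul hu1.exp.continuousOn).add
      ((hcg h₁ h11).mul hu1.exp.continuousOn))
  have hi2 := hci (fun x => 2 * h₂ x * Real.exp (-u x) + ⟪x, gradient h₂ x⟫ * Real.exp (-u x))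
    (((continuousOn_const.mul h21.continuousOn).mul hu1.neg.exp.continuousOn).add
      ((hcg h₂ h21).mul hu1.neg.exp.continuousOn))
  rw [setIntegral_congr_fun hballm hdiv, integral_add (hi1.const_mul ρ) (hi2.const_mul ρ),
    integral_const_mul, integral_const_mul] at main
  have hsU : Metric.sphere (0 : E2) δ ⊆ U := Metric.sphere_subset_closedBall.trans hBU
  have hPs : ∀ θ, PP δ θ ∈ Metric.sphere (0 : E2) δ := fun θ => by simp [PP_norm δ θ hδ.le]
  have hK : ContinuousOn (fun x => (fderiv ℝ u x (δ⁻¹ • x)) ^ 2 - (1 / 2) * ‖gradient u x‖ ^ 2) U := by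
    simp only [norm_grad]
    exact ((hDu.continuousOn.clm_apply (continuousOn_id.const_smul δ⁻¹)).pow 2).sub
      (continuousOn_const.mul ((hp.continuousOn.pow 2).add (hq.continuousOn.pow 2)))
  have hii : ∀ f : E2 → ℝ, ContinuousOn f U →
      IntervalIntegrable (fun θ => f (PP δ θ)) volume (-π) π := fun f hf =>
    (hf.comp_continuous (PP_cont' δ) (fun θ => hsU (hPs θ))).intervalIntegrable _ _
  have hbd : ∀ θ, a (PP δ θ) * Real.cos θ + b (PP δ θ) * Real.sin θ =
      δ * ((fderiv ℝ u (PP δ θ) (δ⁻¹ • PP δ θ)) ^ 2 - (1 / 2) * ‖gradient u (PP δ θ)‖ ^ 2) +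
      δ * ρ * (h₁ (PP δ θ) * Real.exp (u (PP δ θ))) +
      δ * ρ * (h₂ (PP δ θ) * Real.exp (-u (PP δ θ))) := by
    intro θ
    have hpx : fderiv ℝ u (PP δ θ) e0 = p (PP δ θ) := rfl
    have hqx : fderiv ℝ u (PP δ θ) e1 = q (PP δ θ) := rfl
    rw [norm_grad, map_smul, fd_coord _ (PP δ θ)]
    simp only [← he0, ← he1, hpx, hqx, a, b, W, PP_zero, PP_one, smul_eq_mul]
    have hsc := Real.sin_sq_add_cos_sq θ
    have e : δ⁻¹ * (δ * Real.cos θ * p (PP δ θ) + δ * Real.sin θ * q (PP δ θ)) =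
        Real.cos θ * p (PP δ θ) + Real.sin θ * q (PP δ θ) := by
      field_simp
    rw [e]
    linear_combination (δ * (-(1 / 2) * (p (PP δ θ) ^ 2 + q (PP δ θ) ^ 2) +
      ρ * (h₁ (PP δ θ) * Real.exp (u (PP δ θ)) + h₂ (PP δ θ) * Real.exp (-u (PP δ θ))))) * hsc
  have iK := hii _ hK
  have i1 := hii _ hw1.continuousOn
  have i2 := hii _ hw2.continuousOn
  simp only [hbd] at main
  rw [intervalIntegral.integral_add ((iK.const_mul δ).add (i1.const_mul (δ * ρ)))
      (i2.const_mul (δ * ρ)),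
    intervalIntegral.integral_add (iK.const_mul δ) (i1.const_mul (δ * ρ)),
    intervalIntegral.integral_const_mul, intervalIntegral.integral_const_mul,
    intervalIntegral.integral_const_mul] at main
  rw [sphere_integral δ hδ _ (hK.mono hsU), sphere_integral δ hδ _ (hw1.continuousOn.mono hsU),
    sphere_integral δ hδ _ (hw2.continuousOn.mono hsU)]
  linear_combination main
end

section
/- Let a, A, λ, ν, α, β, ξ ∈ ℝ with α + β = 0, and define G on ℝ² \ {0} by G(x) = a·log‖x‖ + A + λ·x₁ + ν·x₂ + α·x₁² + β·x₂² + ξ·x₁·x₂. Then for every r > 0, ∫_{∂B_r(0)} G·(∂G/∂n) dS = 2π·a²·log r + 2π·a·A + π·(λ² + ν²)·r² + 2π·(α² + ξ²/4)·r⁴. -/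
open MeasureTheory
open scoped Real

/-- Rotation of the plane. -/
noncomputable def rotMap (c s : ℝ) (x : E2) : E2 := !₂[c * x 0 - s * x 1, s * x 0 + c * x 1]

lemma rotMap_isometry (c s : ℝ) (h : c ^ 2 + s ^ 2 = 1) : Isometry (rotMap c s) := by
  refine Isometry.of_dist_eq fun x y => ?_
  rw [EuclideanSpace.dist_eq, EuclideanSpace.dist_eq]
  congr 1
  simp only [rotMap, Fin.sum_univ_two, Real.dist_eq, sq_abs]
  simp
  linear_combination ((x 0 - y 0) ^ 2 + (x 1 - y 1) ^ 2) * h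

/-- Rotation as isometric equivalence. -/
noncomputable def rotEquiv (c s : ℝ) (h : c ^ 2 + s ^ 2 = 1) : E2 ≃ᵢ E2 :=
  IsometryEquiv.mk' (rotMap c s) (rotMap c (-s)) (by
    intro x
    ext i
    fin_cases i
    · simp [rotMap]
      linear_combination (x 0) * h
    · simp [rotMap]
      linear_combination (x 1) * h) (rotMap_isometry c s h)

lemma mem_sphere_iff' (r : ℝ) (hr : 0 < r) (x : E2) :
    x ∈ Metric.sphere (0 : E2) r ↔ x 0 ^ 2 + x 1 ^ 2 = r ^ 2 := by
  have h : ‖x‖ ^ 2 = x 0 ^ 2 + x 1 ^ 2 := by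
    rw [EuclideanSpace.norm_sq_eq]; simp
  rw [mem_sphere_zero_iff_norm, ← h]
  constructor
  · intro h; rw [h]
  · intro h; exact (pow_left_inj₀ (norm_nonneg _) hr.le two_ne_zero).1 h

lemma integral_rot (r : ℝ) (hr : 0 < r) (c s : ℝ) (h : c ^ 2 + s ^ 2 = 1) (p : ℝ → ℝ → ℝ) :
    ∫ x in Metric.sphere (0 : E2) r, p (c * x 0 - s * x 1) (s * x 0 + c * x 1) ∂μH[1] =
      ∫ x in Metric.sphere (0 : E2) r, p (x 0) (x 1) ∂μH[1] := by
  have h1 := ((rotEquiv c s h).measurePreserving_hausdorffMeasure 1).setIntegral_preimage_emb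
    (rotEquiv c s h).toHomeomorph.measurableEmbedding (fun x => p (x 0) (x 1))
    (Metric.sphere (0 : E2) r)
  have h2 : (rotEquiv c s h) ⁻¹' (Metric.sphere (0 : E2) r) = Metric.sphere (0 : E2) r := by
    ext x
    rw [Set.mem_preimage, mem_sphere_iff' r hr, mem_sphere_iff' r hr]
    have : (rotEquiv c s h) x = rotMap c s x := rfl
    rw [this]
    simp only [rotMap]
    simp
    have : (c * x 0 - s * x 1) ^ 2 + (s * x 0 + c * x 1) ^ 2 = x 0 ^ 2 + x 1 ^ 2 := by
      linear_combination (x 0 ^ 2 + x 1 ^ 2) * h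
    rw [this]
  rw [h2] at h1
  rw [← h1]
  rfl

/-- Circle parametrization. -/
noncomputable def circ (r : ℝ) (t : ℝ) : E2 := !₂[r * Real.cos t, r * Real.sin t]

lemma circ_dist (r : ℝ) (hr : 0 < r) (s t : ℝ) :
    dist (circ r s) (circ r t) = r * (2 * |Real.sin ((s - t) / 2)|) := by
  rw [EuclideanSpace.dist_eq, Real.sqrt_eq_iff_mul_self_eq (by positivity) (by positivity)]
  simp only [circ, Fin.sum_univ_two, Real.dist_eq, sq_abs]
  simp
  have h1 : |Real.sin ((s - t) / 2)| ^ 2 = 1 / 2 - Real.cos (s - t) / 2 := by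
    rw [sq_abs, Real.sin_sq_eq_half_sub]; congr 3; ring
  have h2 := Real.cos_sub s t
  have h3 := Real.sin_sq_add_cos_sq s
  have h4 := Real.sin_sq_add_cos_sq t
  linear_combination (-4 * r ^ 2) * h1 + 2 * r ^ 2 * h2 + r ^ 2 * h3 + r ^ 2 * h4

lemma circ_lipschitz (r : ℝ) (hr : 0 < r) : LipschitzWith (Real.toNNReal r) (circ r) := by
  refine LipschitzWith.of_dist_le_mul fun s t => ?_
  rw [circ_dist r hr, Real.coe_toNNReal _ hr.le, Real.dist_eq]
  have : |Real.sin ((s - t) / 2)| ≤ |(s - t) / 2| := Real.abs_sin_le_abs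
  rw [abs_div, abs_two] at this
  gcongr
  linarith

lemma circ_image (r : ℝ) (hr : 0 < r) :
    circ r '' Set.Ioc (-π) π = Metric.sphere (0 : E2) r := by
  ext x
  rw [mem_sphere_iff' r hr]
  constructor
  · rintro ⟨t, -, rfl⟩
    simp [circ]
    linear_combination r ^ 2 * Real.sin_sq_add_cos_sq t
  · intro hx
    have hn : ‖(⟨x 0, x 1⟩ : ℂ)‖ = r := by
      rw [Complex.norm_def, Complex.normSq_mk, Real.sqrt_eq_iff_mul_self_eq (by nlinarith [sq_nonneg (x 0), sq_nonneg (x 1)]) hr.le]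
      linarith
    refine ⟨Complex.arg ⟨x 0, x 1⟩, Complex.arg_mem_Ioc _, ?_⟩
    ext i
    fin_cases i
    · have := Complex.norm_mul_cos_arg (⟨x 0, x 1⟩ : ℂ)
      rw [hn] at this
      simpa [circ] using this
    · have := Complex.norm_mul_sin_arg (⟨x 0, x 1⟩ : ℂ)
      rw [hn] at this
      simpa [circ] using this

lemma circ_injOn (r : ℝ) (hr : 0 < r) : Set.InjOn (circ r) (Set.Ioc (-π) π) := by
  intro s hs t ht h
  have h1 := circ_dist r hr s t
  rw [h, dist_self] at h1
  have h2 : Real.sin ((s - t) / 2) = 0 := by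
    have : |Real.sin ((s - t) / 2)| = 0 := by
      rcases mul_eq_zero.1 h1.symm with h | h <;> linarith
    exact abs_eq_zero.1 this
  have h3 := (Real.sin_eq_zero_iff_of_lt_of_lt (by linarith [hs.1, ht.2, Real.pi_pos])
    (by linarith [hs.2, ht.1, Real.pi_pos])).1 h2
  linarith

lemma sphere_le (r : ℝ) (hr : 0 < r) :
    μH[1] (Metric.sphere (0 : E2) r) ≤ ENNReal.ofReal (2 * π * r) := by
  rw [← circ_image r hr]
  refine ((circ_lipschitz r hr).hausdorffMeasure_image_le zero_le_one _).trans ?_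
  rw [hausdorffMeasure_real, Real.volume_Ioc, ENNReal.rpow_one]
  rw [show ((r.toNNReal : NNReal) : ENNReal) = ENNReal.ofReal r from rfl, ← ENNReal.ofReal_mul hr.le]
  apply ENNReal.ofReal_le_ofReal
  linarith

lemma arc_ge (r : ℝ) (hr : 0 < r) (u h : ℝ) (h0 : 0 < h) (h1 : h ≤ 1) :
    ENNReal.ofReal (r * (1 - h ^ 2 / 16) * h) ≤ μH[1] (circ r '' Set.Ioc u (u + h)) := by
  set k := r * (1 - h ^ 2 / 16) with hk
  have hk0 : 0 < k := by rw [hk]; apply mul_pos hr; nlinarith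
  have key : ∀ s ∈ Set.Ioc u (u + h), ∀ t ∈ Set.Ioc u (u + h),
      k * dist s t ≤ dist (circ r s) (circ r t) := by
    have : ∀ d, 0 ≤ d → d ≤ h → d * (1 - h ^ 2 / 16) ≤ 2 * Real.sin (d / 2) := by
      intro d hd hdh
      rcases hd.eq_or_lt with rfl | hd
      · simp
      · have := Real.sin_gt_sub_cube (x := d / 2) (by linarith)
        have h2 : d ^ 2 ≤ h ^ 2 := by gcongr
        have h3 : d * d ^ 2 ≤ d * h ^ 2 := by gcongr
        have h4 : 0 ≤ d ^ 3 := by positivity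
        nlinarith
    intro s hs t ht
    rw [circ_dist r hr, Real.dist_eq]
    have hd : |s - t| ≤ h := by
      rw [abs_le]; constructor <;> linarith [hs.1, hs.2, ht.1, ht.2]
    have h3 := this _ (abs_nonneg (s - t)) hd
    have h4 : Real.sin (|s - t| / 2) ≤ |Real.sin ((s - t) / 2)| := by
      rcases abs_cases (s - t) with ⟨h, _⟩ | ⟨h, _⟩
      · rw [h]; exact le_abs_self _
      · rw [h, neg_div, Real.sin_neg]; exact neg_le_abs _
    rw [hk, mul_assoc]
    apply mul_le_mul_of_nonneg_left _ hr.le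
    linarith
  have hinj : Set.InjOn (circ r) (Set.Ioc u (u + h)) := by
    intro s hs t ht hst
    have := key s hs t ht
    rw [hst, dist_self] at this
    have : dist s t ≤ 0 := by
      by_contra hc
      push Not at hc
      nlinarith
    exact dist_le_zero.1 this
  have hl : LipschitzOnWith (Real.toNNReal k⁻¹) (Function.invFunOn (circ r) (Set.Ioc u (u + h)))
      (circ r '' Set.Ioc u (u + h)) := by
    refine LipschitzOnWith.of_dist_le_mul ?_
    rintro _ ⟨s, hs, rfl⟩ _ ⟨t, ht, rfl⟩
    rw [hinj.leftInvOn_invFunOn hs, hinj.leftInvOn_invFunOn ht,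
      Real.coe_toNNReal _ (inv_nonneg.2 hk0.le), ← div_eq_inv_mul, le_div_iff₀ hk0]
    linarith [key s hs t ht]
  have h5 := hl.hausdorffMeasure_image_le (d := 1) zero_le_one
  rw [hinj.leftInvOn_invFunOn.image_image, hausdorffMeasure_real, Real.volume_Ioc,
    ENNReal.rpow_one] at h5
  rw [ENNReal.ofReal_mul hk0.le]
  have h6 : ENNReal.ofReal (u + h - u) = ENNReal.ofReal h := by congr 1; ring
  rw [h6] at h5
  calc _ ≤ ENNReal.ofReal k * (ENNReal.ofReal k⁻¹ * μH[1] (circ r '' Set.Ioc u (u + h))) := by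
        gcongr; exact h5
    _ = _ := by
        rw [← mul_assoc, ← ENNReal.ofReal_mul hk0.le, mul_inv_cancel₀ hk0.ne']; simp

lemma sphere_ge_aux (r : ℝ) (hr : 0 < r) (n : ℕ) (hn : 7 ≤ n) :
    ENNReal.ofReal (r * (1 - (2 * π / n) ^ 2 / 16) * (2 * π)) ≤
      μH[1] (Metric.sphere (0 : E2) r) := by
  have hn' : (7 : ℝ) ≤ n := by exact_mod_cast hn
  have hn0 : (0 : ℝ) < n := by linarith
  set h := 2 * π / n with hh
  have h0 : 0 < h := by positivity
  have h1 : h ≤ 1 := by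
    rw [hh, div_le_one hn0]; linarith [Real.pi_lt_d2]
  have hnh : n * h = 2 * π := by rw [hh]; field_simp
  let I : Fin n → Set ℝ := fun k => Set.Ioc (-π + k * h) (-π + k * h + h)
  have hI : ∀ k, I k ⊆ Set.Ioc (-π) π := by
    intro k t ht
    have hk : ((k : ℕ) : ℝ) + 1 ≤ n := by exact_mod_cast k.2
    have hk0 : (0 : ℝ) ≤ (k : ℕ) := by positivity
    constructor
    · have := ht.1; nlinarith
    · have := ht.2; nlinarith
  have hdisj : ∀ j k : Fin n, j < k → Disjoint (I j) (I k) := by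
    intro j k hjk
    rw [Set.disjoint_left]
    intro t h2 h3
    have : ((j : ℕ) : ℝ) + 1 ≤ (k : ℕ) := by exact_mod_cast hjk
    have := h2.2
    have := h3.1
    nlinarith
  have hpd : Pairwise (Function.onFun Disjoint fun k => circ r '' I k) := by
    intro j k hjk
    have : Disjoint (I j) (I k) := by
      rcases lt_or_gt_of_ne hjk with h | h
      · exact hdisj j k h
      · exact (hdisj k j h).symm
    exact this.image (circ_injOn r hr) (hI j) (hI k)
  have hm : ∀ k, MeasurableSet (circ r '' I k) := fun k =>
    measurableSet_Ioc.image_of_continuousOn_injOn (circ_lipschitz r hr).continuous.continuousOn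
      ((circ_injOn r hr).mono (hI k))
  calc _ = ∑ k : Fin n, ENNReal.ofReal (r * (1 - h ^ 2 / 16) * h) := by
        rw [Finset.sum_const, Finset.card_univ, Fintype.card_fin, nsmul_eq_mul,
          ← ENNReal.ofReal_natCast, ← ENNReal.ofReal_mul hn0.le, ← hnh]
        congr 1; ring
    _ ≤ ∑ k : Fin n, μH[1] (circ r '' I k) := Finset.sum_le_sum fun k _ => arc_ge r hr _ h h0 h1
    _ = μH[1] (⋃ k, circ r '' I k) := by rw [measure_iUnion hpd hm, tsum_fintype]
    _ ≤ _ := by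
        apply measure_mono
        rw [← circ_image r hr]
        exact Set.iUnion_subset fun k => Set.image_mono (hI k)

lemma sphere_measure (r : ℝ) (hr : 0 < r) :
    μH[1] (Metric.sphere (0 : E2) r) = ENNReal.ofReal (2 * π * r) := by
  refine le_antisymm (sphere_le r hr) ?_
  have ht : Filter.Tendsto (fun n : ℕ => ENNReal.ofReal (r * (1 - (2 * π / n) ^ 2 / 16) * (2 * π)))
      Filter.atTop (nhds (ENNReal.ofReal (r * (1 - 0 ^ 2 / 16) * (2 * π)))) := by
    apply ENNReal.tendsto_ofReal
    have := tendsto_const_div_atTop_nhds_zero_nat (2 * π)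
    exact ((((this.pow 2).div_const 16).const_sub 1).const_mul r).mul_const _
  have := le_of_tendsto ht (Filter.eventually_atTop.2 ⟨7, fun n hn => sphere_ge_aux r hr n hn⟩)
  convert this using 2
  ring

lemma radial_deriv (a A lam ν α β ξ : ℝ) (G : E2 → ℝ)
    (hG : ∀ x : E2, x ≠ 0 →
      G x = a * Real.log ‖x‖ + A + lam * x 0 + ν * x 1 + α * (x 0) ^ 2 + β * (x 1) ^ 2 +
        ξ * x 0 * x 1) (x : E2) (hx : x ≠ 0) :
    fderiv ℝ G x x = a + lam * x 0 + ν * x 1 + 2 * (α * (x 0) ^ 2 + β * (x 1) ^ 2 +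
        ξ * x 0 * x 1) := by
  have hd : DifferentiableAt ℝ G x := by
    have hev : G =ᶠ[nhds x] fun x => a * Real.log ‖x‖ + A + lam * x 0 + ν * x 1 + α * (x 0) ^ 2
        + β * (x 1) ^ 2 + ξ * x 0 * x 1 := by
      filter_upwards [isOpen_ne.mem_nhds hx] with y hy using hG y hy
    refine DifferentiableAt.congr_of_eventuallyEq ?_ hev
    have hl : DifferentiableAt ℝ (fun x : E2 => Real.log ‖x‖) x :=
      (differentiableAt_id.norm ℝ hx).log (norm_ne_zero_iff.2 hx)
    have hp : ∀ i, DifferentiableAt ℝ (fun x : E2 => x i) x := fun i =>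
      (EuclideanSpace.proj (𝕜 := ℝ) i).differentiableAt
    have h0 := hp 0
    have h1 := hp 1
    fun_prop
  have hline : HasDerivAt (fun t : ℝ => t • x) x 1 := by
    simpa using (hasDerivAt_id (1 : ℝ)).smul_const x
  have h1 : HasDerivAt (fun t : ℝ => G (t • x)) (fderiv ℝ G x x) 1 := by
    have : HasFDerivAt G (fderiv ℝ G x) ((1 : ℝ) • x) := by rw [one_smul]; exact hd.hasFDerivAt
    exact this.comp_hasDerivAt 1 hline
  have h2 : HasDerivAt (fun t : ℝ => a * (Real.log t + Real.log ‖x‖) + A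
      + t * (lam * x 0 + ν * x 1) + t ^ 2 * (α * (x 0) ^ 2 + β * (x 1) ^ 2 + ξ * x 0 * x 1))
      (a * (1⁻¹) + 1 * (lam * x 0 + ν * x 1) +
        (((2 : ℕ) : ℝ) * 1 ^ (2 - 1)) * (α * (x 0) ^ 2 + β * (x 1) ^ 2 + ξ * x 0 * x 1)) 1 := by
    refine HasDerivAt.add (HasDerivAt.add (HasDerivAt.add_const _ ?_) ?_) ?_
    · exact ((Real.hasDerivAt_log one_ne_zero).add_const _).const_mul a
    · exact (hasDerivAt_id (1 : ℝ)).mul_const _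
    · exact (hasDerivAt_pow 2 (1 : ℝ)).mul_const _
  have h3 : (fun t : ℝ => G (t • x)) =ᶠ[nhds 1] (fun t : ℝ => a * (Real.log t + Real.log ‖x‖) + A
      + t * (lam * x 0 + ν * x 1) + t ^ 2 * (α * (x 0) ^ 2 + β * (x 1) ^ 2 + ξ * x 0 * x 1)) := by
    filter_upwards [lt_mem_nhds (zero_lt_one' ℝ)] with t ht
    rw [hG _ (smul_ne_zero ht.ne' hx), norm_smul, Real.norm_of_nonneg ht.le,
      Real.log_mul ht.ne' (norm_ne_zero_iff.2 hx)]
    simp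
    ring
  have h4 := h1.unique (h2.congr_of_eventuallyEq h3)
  rw [h4]
  norm_num
  ring

lemma integral_poly (r : ℝ) (hr : 0 < r) (p : ℝ → ℝ → ℝ) (hp : Continuous fun z : ℝ × ℝ => p z.1 z.2)
    (q C : ℝ) (hq : q ^ 2 = 1 / 2)
    (hC : ∀ u v, u ^ 2 + v ^ 2 = r ^ 2 →
      p u v + p (-u) (-v) + p (-v) u + p v (-u) +
      (p (q * u - q * v) (q * u + q * v) + p (-q * u - -q * v) (-q * u + -q * v) +
        p (q * u - -q * v) (-q * u + q * v) + p (-q * u - q * v) (q * u + -q * v)) = 8 * C) :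
    ∫ x in Metric.sphere (0 : E2) r, p (x 0) (x 1) ∂μH[1] = 2 * π * r * C := by
  have hfin : μH[1] (Metric.sphere (0 : E2) r) ≠ ⊤ := by
    rw [sphere_measure r hr]; exact ENNReal.ofReal_ne_top
  have hIntg : ∀ c s : ℝ, IntegrableOn (fun x : E2 => p (c * x 0 - s * x 1) (s * x 0 + c * x 1))
      (Metric.sphere (0 : E2) r) μH[1] := by
    intro c s
    have hc : Continuous (fun x : E2 => p (c * x 0 - s * x 1) (s * x 0 + c * x 1)) :=
      hp.comp (f := fun x : E2 => (c * x 0 - s * x 1, s * x 0 + c * x 1)) (by fun_prop)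
    exact hc.continuousOn.integrableOn_of_subset_isCompact (isCompact_sphere _ _) Metric.isClosed_sphere.measurableSet subset_rfl hfin
  have hI := integral_rot r hr
  let F : ℝ → ℝ → E2 → ℝ := fun c s x => p (c * x 0 - s * x 1) (s * x 0 + c * x 1)
  have hsum : ∫ x in Metric.sphere (0 : E2) r, (F 1 0 x + F (-1) 0 x + F 0 1 x + F 0 (-1) x +
      (F q q x + F (-q) (-q) x + F q (-q) x + F (-q) q x)) ∂μH[1] =
      8 * ∫ x in Metric.sphere (0 : E2) r, p (x 0) (x 1) ∂μH[1] := by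
    have hF : ∀ c s, IntegrableOn (F c s) (Metric.sphere (0 : E2) r) μH[1] := hIntg
    have e : ∀ c s, c ^ 2 + s ^ 2 = 1 → ∫ x in Metric.sphere (0 : E2) r, F c s x ∂μH[1] =
      ∫ x in Metric.sphere (0 : E2) r, p (x 0) (x 1) ∂μH[1] := fun c s h => hI c s h p
    have ad : ∀ (f g : E2 → ℝ) (v w : ℝ),
        (IntegrableOn f (Metric.sphere (0 : E2) r) μH[1] ∧
          ∫ x in Metric.sphere (0 : E2) r, f x ∂μH[1] = v) →
        (IntegrableOn g (Metric.sphere (0 : E2) r) μH[1] ∧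
          ∫ x in Metric.sphere (0 : E2) r, g x ∂μH[1] = w) →
        (IntegrableOn (fun x => f x + g x) (Metric.sphere (0 : E2) r) μH[1] ∧
          ∫ x in Metric.sphere (0 : E2) r, (f x + g x) ∂μH[1] = v + w) := by
      rintro f g v w ⟨h1, h2⟩ ⟨h3, h4⟩
      exact ⟨h1.add h3, by rw [integral_add h1 h3, h2, h4]⟩
    have b := fun c s h => And.intro (hF c s) (e c s h)
    have h1 := ad _ _ _ _ (ad _ _ _ _ (ad _ _ _ _ (b 1 0 (by norm_num)) (b (-1) 0 (by norm_num)))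
      (b 0 1 (by norm_num))) (b 0 (-1) (by norm_num))
    have h2 := ad _ _ _ _ (ad _ _ _ _ (ad _ _ _ _ (b q q (by linarith))
      (b (-q) (-q) (by linarith))) (b q (-q) (by linarith))) (b (-q) q (by linarith))
    rw [(ad _ _ _ _ h1 h2).2]
    ring
  have hconst : ∫ x in Metric.sphere (0 : E2) r, (F 1 0 x + F (-1) 0 x + F 0 1 x + F 0 (-1) x +
      (F q q x + F (-q) (-q) x + F q (-q) x + F (-q) q x)) ∂μH[1] =
      ∫ x in Metric.sphere (0 : E2) r, 8 * C ∂μH[1] := by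
    refine setIntegral_congr_fun Metric.isClosed_sphere.measurableSet fun x hx => ?_
    rw [mem_sphere_iff' r hr] at hx
    have := hC _ _ hx
    simpa [F] using this
  rw [hconst, setIntegral_const, measureReal_def, sphere_measure r hr,
    ENNReal.toReal_ofReal (by positivity), smul_eq_mul] at hsum
  linarith


/-- exact boundary flux of the Green-type function
`G(x) = a log‖x‖ + A + λ x₁ + ν x₂ + α x₁² + β x₂² + ξ x₁ x₂` (with `α + β = 0`):
for every `r > 0`,
`∫_{∂B_r(0)} G ∂G/∂n dS = 2π a² log r + 2π a A + π (λ² + ν²) r² + 2π (α² + ξ²/4) r⁴`,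
where `dS` is arc-length (one-dimensional Hausdorff) measure on the circle and
`∂G/∂n = fderiv ℝ G x (r⁻¹ • x)` is the outward radial derivative. -/
theorem green_flux_expansion (a A lam ν α β ξ : ℝ) (hαβ : α + β = 0)
    (G : E2 → ℝ)
    (hG : ∀ x : E2, x ≠ 0 →
      G x = a * Real.log ‖x‖ + A + lam * x 0 + ν * x 1 + α * (x 0) ^ 2 + β * (x 1) ^ 2 +
        ξ * x 0 * x 1) :
    ∀ r : ℝ, 0 < r →
      (∫ x in Metric.sphere (0 : E2) r, G x * fderiv ℝ G x (r⁻¹ • x) ∂μH[1]) =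
        2 * π * a ^ 2 * Real.log r + 2 * π * a * A + π * (lam ^ 2 + ν ^ 2) * r ^ 2 +
          2 * π * (α ^ 2 + ξ ^ 2 / 4) * r ^ 4 := by
  intro r hr
  obtain ⟨q, hq⟩ : ∃ q : ℝ, q ^ 2 = 1 / 2 := ⟨√(1 / 2), Real.sq_sqrt (by norm_num)⟩
  let p : ℝ → ℝ → ℝ := fun u v =>
    (a * Real.log r + A + (lam * u + ν * v) + (α * u ^ 2 - α * v ^ 2 + ξ * u * v)) *
      (r⁻¹ * (a + (lam * u + ν * v) + 2 * (α * u ^ 2 - α * v ^ 2 + ξ * u * v)))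
  have hβ : β = -α := by linarith
  have h1 : ∫ x in Metric.sphere (0 : E2) r, G x * fderiv ℝ G x (r⁻¹ • x) ∂μH[1] =
      ∫ x in Metric.sphere (0 : E2) r, p (x 0) (x 1) ∂μH[1] := by
    refine setIntegral_congr_fun Metric.isClosed_sphere.measurableSet fun x hx => ?_
    have hn : ‖x‖ = r := mem_sphere_zero_iff_norm.1 hx
    have hx0 : x ≠ 0 := by
      rw [← norm_ne_zero_iff, hn]; exact hr.ne'
    simp only [p]
    rw [map_smul, radial_deriv a A lam ν α β ξ G hG x hx0, hG x hx0, hn, hβ, smul_eq_mul]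
    ring
  rw [h1, integral_poly r hr p (by fun_prop) q
    (r⁻¹ * (a * (a * Real.log r + A) + (lam ^ 2 + ν ^ 2) * r ^ 2 / 2 +
      (α ^ 2 + ξ ^ 2 / 4) * r ^ 4)) hq ?_]
  · field_simp
  · intro u v huv
    simp only [p]
    have hq4 : q ^ 4 = 1 / 4 := by rw [show q ^ 4 = (q ^ 2) ^ 2 by ring, hq]; norm_num
    rw [show r ^ 4 = (r ^ 2) ^ 2 by ring, ← huv]
    ring_nf
    simp only [hq, hq4]
    ring
end
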